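/- Assume that one of the following holds: m = 1; m = 2; m = 3 and q_2 = 2; or n = 1. Then the Terwilliger algebra 𝐓(m,n) of the ordered Hamming scheme 𝔛(m,n) equals the n-fold symmetric tensor algebra of the Terwilliger algebra T of 𝔛(m,1); concretely, 𝐓(m,n) = { M ∈ Mat_{X^n}(ℂ) : M lies in the ℂ-linear span of the Kronecker products M_1⊗⋯⊗M_n with M_1,…,M_n ∈ T, and P_σ M P_σ^{−1} = M for every σ in the symmetric group S_n }, where P_σ ∈ Mat_{X^n}(ℂ) is the permutation matrix of the coordinate permutation (x_1,…,x_n) ↦ (x_{σ^{−1}(1)},…,x_{σ^{−1}(n)}) of X^n. -/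

import Mathlib

/-!
Both inclusions are proved through Kronecker products.

*`𝐓(m,n)` consists of symmetric tensors.* Grouping the pairs `(x, y)` by the tuple of levels of
`x_i - y_i` gives `𝐀_λ = ∑_g A_{g 1} ⊗ ⋯ ⊗ A_{g n}`, summed over the `g` with fibre sizes `λ`,
and likewise for `𝐄*_λ` (`AdjN_eq`, `DualIdemN_eq`); symmetric tensors form an algebra (`TerN_le`).

*Symmetric tensors lie in `𝐓(m,n)`.* Put `D a = ∑ᵢ 1 ⊗ ⋯ ⊗ a ⊗ ⋯ ⊗ 1` (`Dmap`), a homomorphism of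
Lie algebras. Two facts suffice.

* A subalgebra containing `D a` for all `a ∈ T` contains every symmetrized Kronecker product with
  factors in `T`, hence every symmetric tensor over `T` (`symKron_mem`, `symmetric_mem`). Multiplying
  the symmetrization of `M_1 ⊗ ⋯ ⊗ M_n` by `D a` replaces, in turn, each factor `M_j` by `a M_j`;
  this gives an induction on the number of factors different from `1`.

* `D a ∈ 𝐓(m,n)` for all `a ∈ T` (`Dmap_mem_TerN`). The set `S` of all `a` with `D a ∈ 𝐓(m,n)` is a
  Lie subalgebra of `Mat_X(ℂ)` containing every `A_j` and `E*_j`. Replace these by their partial sums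
  `C_j = A_0 + ⋯ + A_j`, the matrix of an equivalence relation, and `f_j = E*_0 + ⋯ + E*_j`, the
  indicator of the ball of radius `j` about `0`. The multiplication rules of the `C_j` and `f_j`
  show that `T` is contained in the span of the products `f_i C_j` and of the blocks
  `R_{ij} = f_i J f_j` (`Ter1_le_Wspan`). The blocks `R_{ij}` are iterated commutators of the `C_j`
  and `f_j`, up to a nonzero scalar and a multiple of `R_{00} = f_0` (`Rm_mem`). If `i ≤ j`, `i = m`
  or `j = 0`, the product `f_i C_j` is a block or one of `C_j`, `f_i`. So only `1 ≤ j < i < m`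
  remains: this is void for `m ≤ 2`, and for `m = 3` it is the single product `f_2 C_1`, which is a
  combination of blocks when `q_2 = 2` (`fm_two_mul_Cm_one`). For `n = 1` the map `D` is
  multiplicative, so `S` is an associative algebra and the products are in it at once.
-/


open Matrix BigOperators

noncomputable section

namespace OHS

variable (m : ℕ) (q : ℕ → ℕ)

/-- The vertex set `X = ∏_{s=1}^m ℤ/q_sℤ` of `𝔛(m,1)`. -/
abbrev Vtx : Type := (i : Fin m) → ZMod (q ((i : ℕ) + 1))

/-- The adjacency matrices `A_j` of `𝔛(m,1)`, given entrywise
(the Kronecker product `J_1⊗⋯⊗J_{j−1}⊗(J_j−I_j)⊗I_{j+1}⊗⋯⊗I_m`, and `A_0` the identity). -/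
def AdjOne (j : ℕ) : Matrix (Vtx m q) (Vtx m q) ℂ :=
  Matrix.of fun x y => ∏ i : Fin m,
    if (i : ℕ) + 1 < j then (1 : ℂ)
    else if (i : ℕ) + 1 = j then (if x i = y i then 0 else 1)
    else if x i = y i then 1 else 0

/-- The primitive idempotents `E_j` of `𝔛(m,1)`, given entrywise
(`E_0 = J̃_1⊗⋯⊗J̃_m`, `E_j = J̃_1⊗⋯⊗J̃_{m−j}⊗(I_{m−j+1}−J̃_{m−j+1})⊗I_{m−j+2}⊗⋯⊗I_m`). -/
def IdemOne (j : ℕ) : Matrix (Vtx m q) (Vtx m q) ℂ :=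
  Matrix.of fun x y => ∏ i : Fin m,
    if (i : ℕ) + 1 < m - j + 1 then ((q ((i : ℕ) + 1) : ℂ))⁻¹
    else if (i : ℕ) + 1 = m - j + 1 then
      (if x i = y i then (1 : ℂ) else 0) - ((q ((i : ℕ) + 1) : ℂ))⁻¹
    else if x i = y i then 1 else 0

/-- The dual primitive idempotents `E*_j` w.r.t. the base point `0`:
the diagonal matrix whose `(y,y)` entry is the `(0,y)` entry of `A_j`. -/
def DualIdemOne (j : ℕ) : Matrix (Vtx m q) (Vtx m q) ℂ :=
  Matrix.diagonal fun y => AdjOne m q j 0 y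

/-- The valency `k_j`: `k_0 = 1` and `k_j = (q_j−1)∏_{s<j} q_s`. -/
def valency (j : ℕ) : ℕ :=
  ∏ i : Fin m,
    if (i : ℕ) + 1 < j then q ((i : ℕ) + 1)
    else if (i : ℕ) + 1 = j then q ((i : ℕ) + 1) - 1
    else 1

/-- The multiplicity `m_j`: `m_0 = 1` and `m_j = (q_{m−j+1}−1)∏_{s=m−j+2}^m q_s`. -/
def multiplicity (j : ℕ) : ℕ :=
  ∏ i : Fin m,
    if m - j + 1 < (i : ℕ) + 1 then q ((i : ℕ) + 1)
    else if (i : ℕ) + 1 = m - j + 1 then q ((i : ℕ) + 1) - 1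
    else 1

section WithFintype

variable [∀ i, NeZero (q i)]

/-- `F_j = (|X|/m_j)·E_j E*_0 E_j`. -/
def Fmat (j : ℕ) : Matrix (Vtx m q) (Vtx m q) ℂ :=
  ((Fintype.card (Vtx m q) : ℂ) / (multiplicity m q j : ℂ)) •
    (IdemOne m q j * DualIdemOne m q 0 * IdemOne m q j)

/-- `F*_j = (|X|/k_j)·E*_j E_0 E*_j`. -/
def FmatStar (j : ℕ) : Matrix (Vtx m q) (Vtx m q) ℂ :=
  ((Fintype.card (Vtx m q) : ℂ) / (valency m q j : ℂ)) •
    (DualIdemOne m q j * IdemOne m q 0 * DualIdemOne m q j)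

/-- `G_j = E_j − F_j`. -/
def Gmat (j : ℕ) : Matrix (Vtx m q) (Vtx m q) ℂ := IdemOne m q j - Fmat m q j

/-- `G*_j = E*_j − F*_j`. -/
def GmatStar (j : ℕ) : Matrix (Vtx m q) (Vtx m q) ℂ :=
  DualIdemOne m q j - FmatStar m q j

/-- The Terwilliger algebra of `𝔛(m,1)` w.r.t. the base point `0`: the unital
ℂ-subalgebra generated by the adjacency matrices and the dual idempotents. -/
def Ter1 : Subalgebra ℂ (Matrix (Vtx m q) (Vtx m q) ℂ) :=
  Algebra.adjoin ℂ
    ({M | ∃ j ≤ m, M = AdjOne m q j} ∪ {M | ∃ j ≤ m, M = DualIdemOne m q j})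

end WithFintype

/-- `Λ(m)`: pairs `(i,j)` with `1 ≤ i,j ≤ m` and either `i+j > m+1`,
or `i+j = m+1` and `q_i ≥ 3`. -/
def LamSet : Finset (ℕ × ℕ) :=
  ((Finset.Icc 1 m) ×ˢ (Finset.Icc 1 m)).filter
    fun p => m + 1 < p.1 + p.2 ∨ (p.1 + p.2 = m + 1 ∧ 3 ≤ q p.1)

variable (n : ℕ)

/-- The largest (1-based) position where `v` is nonzero; `0` if `v = 0`. -/
def level (v : Vtx m q) : ℕ :=
  (Finset.univ.filter fun i : Fin m => v i ≠ 0).sup fun i => (i : ℕ) + 1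

/-- `I(m,n)`: tuples `(λ_0,…,λ_m)` of naturals summing to `n`. -/
def ShapeSet : Finset (Fin (m + 1) → ℕ) :=
  (Fintype.piFinset fun _ : Fin (m + 1) => Finset.range (n + 1)).filter
    fun lam => ∑ j, lam j = n

/-- `x ∈ X^n` has shape `λ`. -/
def hasShape (x : Fin n → Vtx m q) (lam : Fin (m + 1) → ℕ) : Prop :=
  ∀ j : Fin (m + 1),
    (Finset.univ.filter fun i : Fin n => level m q (x i) = (j : ℕ)).card = lam j

instance (x : Fin n → Vtx m q) (lam : Fin (m + 1) → ℕ) :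
    Decidable (hasShape m q n x lam) := by
  unfold hasShape; infer_instance

/-- The `λ`-th adjacency matrix `𝐀_λ` of the ordered Hamming scheme `𝔛(m,n)`. -/
def AdjN (lam : Fin (m + 1) → ℕ) :
    Matrix (Fin n → Vtx m q) (Fin n → Vtx m q) ℂ :=
  Matrix.of fun x y => if hasShape m q n (fun i => x i - y i) lam then 1 else 0

/-- The `λ`-th dual primitive idempotent `𝐄*_λ` of `𝔛(m,n)` (base point `0`). -/
def DualIdemN (lam : Fin (m + 1) → ℕ) :
    Matrix (Fin n → Vtx m q) (Fin n → Vtx m q) ℂ :=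
  Matrix.diagonal fun y => if hasShape m q n y lam then 1 else 0

/-- `L_λ(M_•)`: entrywise, the sum over functions `f` with `#f⁻¹(j) = λ_j` of
`∏_i (M_{f(i)})_{x_i,y_i}`. -/
def Lmat {ι : Type*} [Fintype ι] [DecidableEq ι]
    (M : ι → Matrix (Vtx m q) (Vtx m q) ℂ) (lam : ι → ℕ) :
    Matrix (Fin n → Vtx m q) (Fin n → Vtx m q) ℂ :=
  Matrix.of fun x y =>
    ∑ f ∈ Finset.univ.filter
        (fun f : Fin n → ι =>
          ∀ j, (Finset.univ.filter fun i => f i = j).card = lam j),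
      ∏ i, M (f i) (x i) (y i)

/-- The Kronecker product `M_1⊗⋯⊗M_n`. -/
def kron (M : Fin n → Matrix (Vtx m q) (Vtx m q) ℂ) :
    Matrix (Fin n → Vtx m q) (Fin n → Vtx m q) ℂ :=
  Matrix.of fun x y => ∏ i, M i (x i) (y i)

section WithFintype2

variable [∀ i, NeZero (q i)]

/-- The Terwilliger algebra `𝐓(m,n)` of `𝔛(m,n)` w.r.t. the zero base point. -/
def TerN : Subalgebra ℂ (Matrix (Fin n → Vtx m q) (Fin n → Vtx m q) ℂ) :=
  Algebra.adjoin ℂ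
    ({M | ∃ lam ∈ ShapeSet m n, M = AdjN m q n lam} ∪
      {M | ∃ lam ∈ ShapeSet m n, M = DualIdemN m q n lam})

end WithFintype2

/-- The entry `P_i(j; r)` of the first eigenmatrix for the parameter sequence `r`. -/
def PEnt (r : ℕ → ℕ) (i j : ℕ) : ℂ :=
  if i + j < m + 1 then (valency m r i : ℂ)
  else if i + j = m + 1 then -(valency m r i : ℂ) / ((r i : ℂ) - 1)
  else 0

/-- The multivariate Krawtchouk polynomial `K_μ(λ; r_1,…,r_m)`: the coefficient of
`z^μ` in `∏_{j=0}^m (Σ_{i=0}^m P_i(j;r) z_i)^{λ_j}`. -/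
def Kraw (r : ℕ → ℕ) (mu lam : Fin (m + 1) → ℕ) : ℂ :=
  MvPolynomial.coeff (Finsupp.equivFunOnFinite.symm mu)
    (∏ j : Fin (m + 1),
      (∑ i : Fin (m + 1),
        MvPolynomial.C (PEnt m r (i : ℕ) (j : ℕ)) * MvPolynomial.X i) ^ lam j)

/-- `C(m,n)`: tuples `(τ_1,…,τ_m)` of naturals summing to `n`. -/
def Ctuples : Finset (Fin m → ℕ) :=
  (Fintype.piFinset fun _ : Fin m => Finset.range (n + 1)).filter
    fun t => ∑ i, t i = n

/-- `Θ(λ,μ)`: nonnegative-integer `m×m` matrices supported on `Λ(m)` with row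
sums `λ` and column sums `μ`. -/
def ThetaSet (lam mu : Fin m → ℕ) : Finset (Fin m → Fin m → ℕ) :=
  (Fintype.piFinset fun _ : Fin m =>
      Fintype.piFinset fun _ : Fin m => Finset.range (n + 1)).filter
    fun c =>
      (∀ i j : Fin m, ((i : ℕ) + 1, (j : ℕ) + 1) ∉ LamSet m q → c i j = 0) ∧
      (∀ i, ∑ j, c i j = lam i) ∧ (∀ j, ∑ i, c i j = mu j)

/-- `Ω(m,n)`: the pairs `(λ,μ)` with `Θ(λ,μ) ≠ ∅`. -/
def OmegaSet : Finset ((Fin m → ℕ) × (Fin m → ℕ)) :=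
  ((Ctuples m n) ×ˢ (Ctuples m n)).filter
    fun p => (ThetaSet m q n p.1 p.2).Nonempty

/-- The permutation matrix `P_σ` of the coordinate permutation
`(x_1,…,x_n) ↦ (x_{σ⁻¹(1)},…,x_{σ⁻¹(n)})` of `X^n`. -/
def permMat (σ : Equiv.Perm (Fin n)) :
    Matrix (Fin n → Vtx m q) (Fin n → Vtx m q) ℂ :=
  Matrix.of fun x y => if x = y ∘ ⇑σ⁻¹ then 1 else 0

/-! ### Levels and the generators of `T` -/

section OneCoordinate

variable {m : ℕ} {q : ℕ → ℕ}

theorem level_le_iff (v : Vtx m q) (j : ℕ) :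
    level m q v ≤ j ↔ ∀ i : Fin m, j ≤ (i : ℕ) → v i = 0 := by
  unfold level
  rw [Finset.sup_le_iff]
  refine forall_congr' fun i => ?_
  simp only [Finset.mem_filter, Finset.mem_univ, true_and]
  by_cases h : v i = 0 <;> simp [h]

theorem level_le_m (v : Vtx m q) : level m q v ≤ m := by
  rw [level_le_iff]
  intro i hi
  have := i.2
  omega

theorem level_sub_le_iff (x y : Vtx m q) (j : ℕ) :
    level m q (x - y) ≤ j ↔ ∀ i : Fin m, j ≤ (i : ℕ) → x i = y i := by
  simp [level_le_iff, sub_eq_zero]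

theorem level_le_zero_iff (v : Vtx m q) : level m q v ≤ 0 ↔ v = 0 := by
  rw [level_le_iff, funext_iff]
  simp

theorem adjOne_apply {j : ℕ} (hj : j ≤ m) (x y : Vtx m q) :
    AdjOne m q j x y = if level m q (x - y) = j then 1 else 0 := by
  have h1 : AdjOne m q j x y = ∏ i : Fin m,
      if (j ≤ (i : ℕ) → x i = y i) ∧ ((i : ℕ) + 1 = j → x i ≠ y i) then (1 : ℂ) else 0 := by
    unfold AdjOne
    rw [Matrix.of_apply]
    refine Finset.prod_congr rfl fun i _ => ?_
    by_cases h : x i = y i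
    · simp only [h, ne_eq, not_true_eq_false, imp_false, imp_true_iff, true_and, if_true]
      split_ifs <;> first | rfl | omega
    · simp only [h, imp_false, if_false, ne_eq, not_false_eq_true, imp_true_iff, and_true]
      split_ifs <;> first | rfl | omega
  rw [h1, Finset.prod_ite_zero]
  simp only [Finset.prod_const_one, Finset.mem_univ, true_imp_iff, forall_and,
    ← level_sub_le_iff]
  congr 1
  rw [eq_iff_iff]
  constructor
  · rintro ⟨h, h'⟩
    refine le_antisymm h ?_
    by_contra! hlt
    have hle : level m q (x - y) ≤ j - 1 := by omega
    rw [level_sub_le_iff] at hle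
    exact h' ⟨j - 1, by omega⟩ (by simp; omega) (hle _ le_rfl)
  · intro h
    refine ⟨h.le, fun i hi hxy => ?_⟩
    have : level m q (x - y) ≤ (i : ℕ) := by
      rw [level_sub_le_iff]
      intro k hk
      rcases hk.eq_or_lt with hk | hk
      · rw [← Fin.ext hk]; exact hxy
      · exact (level_sub_le_iff x y j).1 h.le k (by omega)
    omega

theorem level_neg (v : Vtx m q) : level m q (-v) = level m q v := by
  simp [level]

theorem dualIdemOne_eq {j : ℕ} (hj : j ≤ m) :
    DualIdemOne m q j = Matrix.diagonal fun y => if level m q y = j then 1 else 0 := by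
  unfold DualIdemOne
  simp [adjOne_apply hj, level_neg]

/-! ### Ball relations and ball indicators -/

/-- The relation matrix `A_0 + ⋯ + A_j` of the equivalence relation that `x - y` has
level at most `j`. -/
def Cm (m : ℕ) (q : ℕ → ℕ) (j : ℕ) : Matrix (Vtx m q) (Vtx m q) ℂ :=
  Matrix.of fun x y => if level m q (x - y) ≤ j then 1 else 0

/-- The diagonal indicator `E*_0 + ⋯ + E*_j` of the ball of radius `j` about `0`. -/
def fm (m : ℕ) (q : ℕ → ℕ) (j : ℕ) : Matrix (Vtx m q) (Vtx m q) ℂ :=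
  Matrix.diagonal fun y => if level m q y ≤ j then 1 else 0

/-- The all-ones block on (ball of radius `i`) × (ball of radius `j`). -/
def Rm (m : ℕ) (q : ℕ → ℕ) (i j : ℕ) : Matrix (Vtx m q) (Vtx m q) ℂ :=
  Matrix.of fun x y => if level m q x ≤ i ∧ level m q y ≤ j then 1 else 0

theorem Cm_transpose (j : ℕ) : (Cm m q j)ᵀ = Cm m q j := by
  ext x y
  simp only [Cm, Matrix.transpose_apply, Matrix.of_apply, level_sub_le_iff, eq_comm]

theorem fm_transpose (j : ℕ) : (fm m q j)ᵀ = fm m q j := by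
  simp [fm]

theorem Rm_transpose (i j : ℕ) : (Rm m q i j)ᵀ = Rm m q j i := by
  ext x y
  simp only [Rm, Matrix.transpose_apply, Matrix.of_apply, and_comm]

theorem fm_m : fm m q m = 1 := by
  simp [fm, level_le_m, Matrix.diagonal_one]

theorem Cm_zero : Cm m q 0 = 1 := by
  ext x y
  simp only [Cm, Matrix.of_apply, level_le_zero_iff, Matrix.one_apply, sub_eq_zero]

theorem Rm_zero : Rm m q 0 0 = fm m q 0 := by
  ext x y
  simp only [Rm, fm, level_le_zero_iff, Matrix.of_apply, Matrix.diagonal_apply]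
  by_cases h : x = y <;> by_cases h' : x = 0 <;> aesop

theorem adjOne_succ {j : ℕ} (hj : j + 1 ≤ m) :
    AdjOne m q (j + 1) = Cm m q (j + 1) - Cm m q j := by
  ext x y
  rw [adjOne_apply hj, Matrix.sub_apply]
  simp only [Cm, Matrix.of_apply]
  split_ifs <;> first | omega | simp

theorem adjOne_zero : AdjOne m q 0 = Cm m q 0 := by
  ext x y
  simp [adjOne_apply (Nat.zero_le m), Cm]

theorem dualIdemOne_succ {j : ℕ} (hj : j + 1 ≤ m) :
    DualIdemOne m q (j + 1) = fm m q (j + 1) - fm m q j := by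
  rw [dualIdemOne_eq hj, fm, fm, Matrix.diagonal_sub]
  congr 1
  ext y
  split_ifs <;> first | omega | simp

theorem dualIdemOne_zero : DualIdemOne m q 0 = fm m q 0 := by
  rw [dualIdemOne_eq (Nat.zero_le m), fm]
  simp

theorem Cm_mem (S : Submodule ℂ (Matrix (Vtx m q) (Vtx m q) ℂ))
    (hA : ∀ j ≤ m, AdjOne m q j ∈ S) (j : ℕ) : Cm m q j ∈ S := by
  induction j with
  | zero => rw [← adjOne_zero]; exact hA 0 (Nat.zero_le m)
  | succ j ih =>
    by_cases hj : j + 1 ≤ m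
    · have := add_mem (hA _ hj) ih
      rwa [adjOne_succ hj, sub_add_cancel] at this
    · have : Cm m q (j + 1) = Cm m q j := by
        ext x y
        have := level_le_m (x - y)
        simp only [Cm, Matrix.of_apply]
        rw [if_pos (by omega), if_pos (by omega)]
      rwa [this]

theorem fm_mem (S : Submodule ℂ (Matrix (Vtx m q) (Vtx m q) ℂ))
    (hE : ∀ j ≤ m, DualIdemOne m q j ∈ S) (j : ℕ) : fm m q j ∈ S := by
  induction j with
  | zero => rw [← dualIdemOne_zero]; exact hE 0 (Nat.zero_le m)
  | succ j ih =>
    by_cases hj : j + 1 ≤ m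
    · have := add_mem (hE _ hj) ih
      rwa [dualIdemOne_succ hj, sub_add_cancel] at this
    · have : fm m q (j + 1) = fm m q j := by
        unfold fm
        congr 1
        ext y
        have := level_le_m y
        rw [if_pos (by omega), if_pos (by omega)]
      rwa [this]

variable [∀ i, NeZero (q i)]

/-- The size of a ball of radius `j`. -/
def ballCard (m : ℕ) (q : ℕ → ℕ) [∀ i, NeZero (q i)] (j : ℕ) : ℂ :=
  ∑ z : Vtx m q, if level m q z ≤ j then 1 else 0

theorem ballCard_ne_zero (j : ℕ) : ballCard m q j ≠ 0 := by
  unfold ballCard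
  rw [Finset.sum_boole]
  simp only [ne_eq, Nat.cast_eq_zero, Finset.card_eq_zero]
  intro h
  have : (0 : Vtx m q) ∈ Finset.univ.filter fun z : Vtx m q => level m q z ≤ j := by
    simp [level_le_iff]
  simp [h] at this

/-- By translation, balls about any point have the same size. -/
theorem sum_ball (x : Vtx m q) (j : ℕ) :
    (∑ z : Vtx m q, if level m q (x - z) ≤ j then (1 : ℂ) else 0) = ballCard m q j := by
  unfold ballCard
  exact Fintype.sum_equiv (Equiv.subLeft x) _ _ fun z => rfl

theorem fm_mul_fm (i j : ℕ) : fm m q i * fm m q j = fm m q (min i j) := by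
  unfold fm
  rw [Matrix.diagonal_mul_diagonal]
  congr 1
  ext y
  simp only [le_min_iff]
  split_ifs <;> simp_all

theorem fm_mul_apply (i : ℕ) (M : Matrix (Vtx m q) (Vtx m q) ℂ) (x y : Vtx m q) :
    (fm m q i * M) x y = if level m q x ≤ i then M x y else 0 := by
  simp [fm]

theorem fm_mul_Rm (k i j : ℕ) : fm m q k * Rm m q i j = Rm m q (min k i) j := by
  ext x y
  rw [fm_mul_apply]
  simp only [Rm, Matrix.of_apply, le_min_iff]
  split_ifs <;> simp_all

theorem Rm_mul_fm (i j k : ℕ) : Rm m q i j * fm m q k = Rm m q i (min k j) := by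
  rw [← Matrix.transpose_inj, Matrix.transpose_mul, fm_transpose, Rm_transpose, fm_mul_Rm,
    Rm_transpose]

theorem fm_mul_Cm {i j : ℕ} (h : i ≤ j) : fm m q i * Cm m q j = Rm m q i j := by
  ext x y
  rw [fm_mul_apply]
  simp only [Rm, Cm, Matrix.of_apply, ite_and]
  by_cases hx : level m q x ≤ i
  · simp only [hx, if_true]
    congr 1
    rw [level_sub_le_iff, level_le_iff, eq_iff_iff]
    rw [level_le_iff] at hx
    refine forall_congr' fun k => forall_congr' fun hk => ?_
    rw [hx k (h.trans hk), eq_comm]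
  · simp [hx]

theorem Cm_mul_fm {i j : ℕ} (h : i ≤ j) : Cm m q j * fm m q i = Rm m q j i := by
  rw [← Matrix.transpose_inj, Matrix.transpose_mul, fm_transpose, Rm_transpose, Cm_transpose,
    fm_mul_Cm h]

theorem Cm_comm_fm {i j : ℕ} (h : j ≤ i) : Cm m q j * fm m q i = fm m q i * Cm m q j := by
  ext x y
  rw [fm_mul_apply]
  simp only [fm, Matrix.mul_diagonal, Cm, Matrix.of_apply]
  by_cases hx : level m q (x - y) ≤ j
  · have : level m q x ≤ i ↔ level m q y ≤ i := by
      rw [level_le_iff, level_le_iff]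
      rw [level_sub_le_iff] at hx
      exact forall_congr' fun k => forall_congr' fun hk => by rw [hx k (h.trans hk)]
    simp [hx, this]
  · simp [hx]

theorem Cm_mul_Cm_of_le {j k : ℕ} (h : j ≤ k) :
    Cm m q j * Cm m q k = ballCard m q j • Cm m q k := by
  ext x y
  rw [Matrix.mul_apply, Matrix.smul_apply, ← sum_ball x, smul_eq_mul, Finset.sum_mul]
  refine Finset.sum_congr rfl fun z _ => ?_
  simp only [Cm, Matrix.of_apply]
  by_cases hx : level m q (x - z) ≤ j
  · have : level m q (x - y) ≤ k ↔ level m q (z - y) ≤ k := by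
      rw [level_sub_le_iff, level_sub_le_iff]
      rw [level_sub_le_iff] at hx
      exact forall_congr' fun l => forall_congr' fun hl => by rw [hx l (h.trans hl)]
    simp [hx, this]
  · simp [hx]

theorem Cm_mul_Cm (j k : ℕ) :
    Cm m q j * Cm m q k = ballCard m q (min j k) • Cm m q (max j k) := by
  rcases le_total j k with h | h
  · rw [min_eq_left h, max_eq_right h, Cm_mul_Cm_of_le h]
  · rw [min_eq_right h, max_eq_left h, ← Matrix.transpose_inj, Matrix.transpose_mul,
      Cm_transpose, Cm_transpose, Cm_mul_Cm_of_le h, Matrix.transpose_smul, Cm_transpose]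

theorem Rm_mul_Rm (i j k l : ℕ) :
    Rm m q i j * Rm m q k l = ballCard m q (min j k) • Rm m q i l := by
  ext x y
  rw [Matrix.mul_apply, Matrix.smul_apply, ballCard, smul_eq_mul, Finset.sum_mul]
  refine Finset.sum_congr rfl fun z _ => ?_
  simp only [Rm, Matrix.of_apply, le_min_iff]
  split_ifs <;> simp_all

theorem Cm_mul_Rm_of_le {k i : ℕ} (h : k ≤ i) (j : ℕ) :
    Cm m q k * Rm m q i j = ballCard m q k • Rm m q i j := by
  -- Factoring `Rm i j` through `Cm i` reduces the claim to the product `Cm k * Cm i`.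
  have hR : Rm m q i j = Cm m q i * Rm m q 0 0 * Rm m q 0 j * (ballCard m q 0)⁻¹ • 1 := by
    rw [Rm_zero, Cm_mul_fm (Nat.zero_le i), Rm_mul_Rm]
    simp [ballCard_ne_zero]
  rw [hR]
  simp only [← mul_assoc]
  rw [Cm_mul_Cm_of_le h]
  simp [smul_comm (ballCard m q k)]

theorem Cm_mul_Rm_of_ge {k i : ℕ} (h : i ≤ k) (j : ℕ) :
    Cm m q k * Rm m q i j = ballCard m q i • Rm m q k j := by
  have h0 : Rm m q i j = fm m q i * Rm m q i j := by rw [fm_mul_Rm, min_self]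
  rw [h0, ← mul_assoc, Cm_mul_fm h, Rm_mul_Rm, min_self]

theorem Rm_mul_Cm (i j k : ℕ) : ∃ (c : ℂ) (l : ℕ), Rm m q i j * Cm m q k = c • Rm m q i l := by
  rw [← Cm_transpose, ← Rm_transpose j i, ← Matrix.transpose_mul]
  rcases le_total k j with h | h
  · exact ⟨ballCard m q k, j, by rw [Cm_mul_Rm_of_le h, Matrix.transpose_smul, Rm_transpose]⟩
  · exact ⟨ballCard m q j, k, by rw [Cm_mul_Rm_of_ge h, Matrix.transpose_smul, Rm_transpose]⟩

/-! ### A spanning set of `T` -/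

/-- The span of the blocks `Rm i j` and the products `fm i * Cm j`; it contains `Ter1`. -/
def Wspan (m : ℕ) (q : ℕ → ℕ) [∀ i, NeZero (q i)] :
    Submodule ℂ (Matrix (Vtx m q) (Vtx m q) ℂ) :=
  Submodule.span ℂ ({M | ∃ i j, M = Rm m q i j} ∪ {M | ∃ i j, M = fm m q i * Cm m q j})

theorem Rm_mem_Wspan (i j : ℕ) : Rm m q i j ∈ Wspan m q :=
  Submodule.subset_span (Or.inl ⟨i, j, rfl⟩)

theorem fm_mul_Cm_mem_Wspan (i j : ℕ) : fm m q i * Cm m q j ∈ Wspan m q :=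
  Submodule.subset_span (Or.inr ⟨i, j, rfl⟩)

theorem fm_mul_mem_Wspan (k : ℕ) {w : Matrix (Vtx m q) (Vtx m q) ℂ} (hw : w ∈ Wspan m q) :
    fm m q k * w ∈ Wspan m q := by
  unfold Wspan at hw
  induction hw using Submodule.span_induction with
  | mem x hx =>
    rcases hx with ⟨i, j, rfl⟩ | ⟨i, j, rfl⟩
    · rw [fm_mul_Rm]; exact Rm_mem_Wspan _ _
    · rw [← mul_assoc, fm_mul_fm]; exact fm_mul_Cm_mem_Wspan _ _
  | zero => simp
  | add x y _ _ hx hy => rw [mul_add]; exact add_mem hx hy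
  | smul a x _ hx => rw [Matrix.mul_smul]; exact Submodule.smul_mem _ _ hx

theorem Cm_mul_mem_Wspan (k : ℕ) {w : Matrix (Vtx m q) (Vtx m q) ℂ} (hw : w ∈ Wspan m q) :
    Cm m q k * w ∈ Wspan m q := by
  unfold Wspan at hw
  induction hw using Submodule.span_induction with
  | mem x hx =>
    rcases hx with ⟨i, j, rfl⟩ | ⟨i, j, rfl⟩
    · rcases le_total k i with h | h
      · rw [Cm_mul_Rm_of_le h]; exact Submodule.smul_mem _ _ (Rm_mem_Wspan _ _)
      · rw [Cm_mul_Rm_of_ge h]; exact Submodule.smul_mem _ _ (Rm_mem_Wspan _ _)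
    · rcases le_total k i with h | h
      · rw [← mul_assoc, Cm_comm_fm h, mul_assoc, Cm_mul_Cm, Matrix.mul_smul]
        exact Submodule.smul_mem _ _ (fm_mul_Cm_mem_Wspan _ _)
      · rw [← mul_assoc, Cm_mul_fm h]
        obtain ⟨c, l, hc⟩ := Rm_mul_Cm (m := m) (q := q) k i j
        rw [hc]; exact Submodule.smul_mem _ _ (Rm_mem_Wspan _ _)
  | zero => simp
  | add x y _ _ hx hy => rw [mul_add]; exact add_mem hx hy
  | smul a x _ hx => rw [Matrix.mul_smul]; exact Submodule.smul_mem _ _ hx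

theorem Ter1_le_Wspan {M : Matrix (Vtx m q) (Vtx m q) ℂ} (hM : M ∈ Ter1 m q) :
    M ∈ Wspan m q := by
  -- `Wspan` contains `1` and is stable under left multiplication by the generators.
  suffices h : ∀ w ∈ Wspan m q, M * w ∈ Wspan m q by
    have h1 := fm_mul_Cm_mem_Wspan (m := m) (q := q) m 0
    rw [fm_m, Cm_zero, mul_one] at h1
    simpa using h 1 h1
  unfold Ter1 at hM
  induction hM using Algebra.adjoin_induction with
  | mem x hx =>
    intro w hw
    rcases hx with ⟨j, hj, rfl⟩ | ⟨j, hj, rfl⟩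
    · cases j with
      | zero => rw [adjOne_zero]; exact Cm_mul_mem_Wspan _ hw
      | succ j =>
        rw [adjOne_succ hj, sub_mul]
        exact sub_mem (Cm_mul_mem_Wspan _ hw) (Cm_mul_mem_Wspan _ hw)
    · cases j with
      | zero => rw [dualIdemOne_zero]; exact fm_mul_mem_Wspan _ hw
      | succ j =>
        rw [dualIdemOne_succ hj, sub_mul]
        exact sub_mem (fm_mul_mem_Wspan _ hw) (fm_mul_mem_Wspan _ hw)
  | algebraMap r =>
    intro w hw
    rw [← Algebra.smul_def]; exact Submodule.smul_mem _ _ hw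
  | add x y _ _ hx hy => intro w hw; rw [add_mul]; exact add_mem (hx w hw) (hy w hw)
  | mul x y _ _ hx hy => intro w hw; rw [mul_assoc]; exact hx _ (hy w hw)

/-! ### The Lie algebra generated by the `C_j` and `f_j` -/

section Lie

variable (S : Submodule ℂ (Matrix (Vtx m q) (Vtx m q) ℂ))

/-- A Lie algebra containing all `C_j` and `f_j` contains all blocks `R_{ij}`: the commutators
`[C_j, f_0]` and `[f_0, [C_j, f_0]]` give `R_{j0}` and `R_{0j}`, and `[R_{i0}, R_{0j}]` is
a nonzero multiple of `R_{ij}` modulo `R_{00}`. -/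
theorem Rm_mem (hbr : ∀ a ∈ S, ∀ b ∈ S, a * b - b * a ∈ S) (hC : ∀ j, Cm m q j ∈ S)
    (hf : ∀ j, fm m q j ∈ S) (i j : ℕ) : Rm m q i j ∈ S := by
  have h00 : Rm m q 0 0 ∈ S := by rw [Rm_zero]; exact hf 0
  have hdiff : ∀ j, Rm m q j 0 - Rm m q 0 j ∈ S := by
    intro j
    have := hbr _ (hC j) _ (hf 0)
    rwa [Cm_mul_fm (Nat.zero_le j), fm_mul_Cm (Nat.zero_le j)] at this
  have hsum : ∀ j, Rm m q j 0 + Rm m q 0 j ∈ S := by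
    intro j
    have h := hbr _ (hf 0) _ (hdiff j)
    simp only [mul_sub, sub_mul, fm_mul_Rm, Rm_mul_fm, Nat.zero_min, min_self] at h
    have h2 := sub_mem (add_mem h00 h00) h
    convert h2 using 1
    abel
  have hl : ∀ j, Rm m q j 0 ∈ S := by
    intro j
    have h := Submodule.smul_mem S (1 / 2 : ℂ) (add_mem (hdiff j) (hsum j))
    convert h using 1
    module
  have hr : ∀ j, Rm m q 0 j ∈ S := by
    intro j
    have h := sub_mem (hsum j) (hl j)
    rwa [add_sub_cancel_left] at h
  have h := hbr _ (hl i) _ (hr j)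
  rw [Rm_mul_Rm, Rm_mul_Rm] at h
  have h2 := add_mem h (Submodule.smul_mem S (ballCard m q (min j i)) h00)
  rw [sub_add_cancel] at h2
  exact (Submodule.smul_mem_iff S (ballCard_ne_zero _)).1 h2

/-- In `ℤ/2ℤ`, equality is detected by vanishing. -/
theorem zmod_two_eq_iff {k : ℕ} (hk : k = 2) (a b : ZMod k) : a = b ↔ (a = 0 ↔ b = 0) := by
  subst hk
  revert a b
  decide

/-- For `m = 3` and `q_2 = 2`, two points of the ball of radius `2` are at distance at most `1`
iff both or neither lie in the ball of radius `1`. -/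
theorem fm_two_mul_Cm_one {q : ℕ → ℕ} [∀ i, NeZero (q i)] (h2 : q 2 = 2) :
    fm 3 q 2 * Cm 3 q 1 =
      (2 : ℂ) • Rm 3 q 1 1 + Rm 3 q 2 2 - Rm 3 q 1 2 - Rm 3 q 2 1 := by
  ext x y
  have key := zmod_two_eq_iff (k := q (((1 : Fin 3) : ℕ) + 1)) h2 (x 1) (y 1)
  have hl1 : ∀ v : Vtx 3 q, level 3 q v ≤ 1 ↔ v 1 = 0 ∧ v 2 = 0 := fun v => by
    rw [level_le_iff, Fin.forall_fin_succ, Fin.forall_fin_two]; simp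
  have hl2 : ∀ v : Vtx 3 q, level 3 q v ≤ 2 ↔ v 2 = 0 := fun v => by
    rw [level_le_iff, Fin.forall_fin_succ, Fin.forall_fin_two]; simp
  have hs : level 3 q (x - y) ≤ 1 ↔ x 1 = y 1 ∧ x 2 = y 2 := by
    rw [hl1, Pi.sub_apply, Pi.sub_apply, sub_eq_zero, sub_eq_zero]
  simp only [fm_mul_apply, Cm, Rm, Matrix.add_apply, Matrix.sub_apply, Matrix.smul_apply,
    Matrix.of_apply, hs, hl1 x, hl1 y, hl2]
  by_cases hx2 : x 2 = 0
  · simp only [hx2, key, eq_comm (a := (0 : ZMod _)), true_and, and_true, if_true]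
    by_cases hx1 : x 1 = 0 <;> by_cases hy1 : y 1 = 0 <;> by_cases hy2 : y 2 = 0 <;>
      simp [hx1, hy1, hy2] <;> norm_num
  · simp [hx2]

/-- In the cases `m ≤ 2` and `m = 3, q_2 = 2`, a Lie algebra containing all `C_j` and `f_j` contains
their products `f_i C_j`. -/
theorem fm_mul_Cm_mem (hbr : ∀ a ∈ S, ∀ b ∈ S, a * b - b * a ∈ S) (hC : ∀ j, Cm m q j ∈ S)
    (hf : ∀ j, fm m q j ∈ S) (hcase : m = 1 ∨ m = 2 ∨ (m = 3 ∧ q 2 = 2)) (i j : ℕ) :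
    fm m q i * Cm m q j ∈ S := by
  have hR := Rm_mem S hbr hC hf
  rcases le_or_gt i j with h | h
  · rw [fm_mul_Cm h]; exact hR _ _
  rcases le_or_gt m i with hi | hi
  · have : fm m q i = 1 := by
      rw [← fm_m]
      unfold fm
      congr 1
      ext y
      have := level_le_m y
      rw [if_pos (by omega), if_pos (by omega)]
    rw [this, one_mul]; exact hC j
  rcases Nat.eq_zero_or_pos j with rfl | hj
  · rw [Cm_zero, mul_one]; exact hf i
  rcases hcase with h1 | h1 | ⟨h1, h2⟩
  · omega
  · omega
  · obtain rfl : i = 2 := by omega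
    obtain rfl : j = 1 := by omega
    subst h1
    rw [fm_two_mul_Cm_one h2]
    exact sub_mem (sub_mem (add_mem (Submodule.smul_mem _ _ (hR _ _)) (hR _ _)) (hR _ _)) (hR _ _)

theorem Wspan_le (hR : ∀ i j, Rm m q i j ∈ S) (hfC : ∀ i j, fm m q i * Cm m q j ∈ S) :
    Wspan m q ≤ S := by
  refine Submodule.span_le.2 ?_
  rintro _ (⟨i, j, rfl⟩ | ⟨i, j, rfl⟩)
  · exact hR i j
  · exact hfC i j

end Lie

end OneCoordinate

/-! ### Kronecker products and symmetric tensors -/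

section Tensor

variable {m n : ℕ} {q : ℕ → ℕ}

theorem kron_apply (Ms : Fin n → Matrix (Vtx m q) (Vtx m q) ℂ) (x y : Fin n → Vtx m q) :
    kron m q n Ms x y = ∏ i, Ms i (x i) (y i) := rfl

theorem kron_update_apply (Ms : Fin n → Matrix (Vtx m q) (Vtx m q) ℂ) (i : Fin n)
    (a : Matrix (Vtx m q) (Vtx m q) ℂ) (x y : Fin n → Vtx m q) :
    kron m q n (Function.update Ms i a) x y =
      a (x i) (y i) * ∏ k ∈ Finset.univ.erase i, Ms k (x k) (y k) := by
  rw [kron_apply, ← Finset.mul_prod_erase _ _ (Finset.mem_univ i), Function.update_self]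
  congr 1
  refine Finset.prod_congr rfl fun k hk => ?_
  rw [Function.update_of_ne (Finset.ne_of_mem_erase hk)]

theorem kron_one : kron m q n (fun _ => 1) = 1 := by
  ext x y
  simp only [kron_apply, Matrix.one_apply, Finset.prod_ite_zero, Finset.prod_const_one,
    funext_iff, Finset.mem_univ, true_imp_iff]

/-- Conjugation by `P_σ` permutes the coordinates of both indices. -/
theorem permMat_conj_apply [∀ i, NeZero (q i)] (σ : Equiv.Perm (Fin n))
    (M : Matrix (Fin n → Vtx m q) (Fin n → Vtx m q) ℂ) (x y : Fin n → Vtx m q) :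
    (permMat m q n σ * M * permMat m q n σ⁻¹) x y = M (x ∘ σ) (y ∘ σ) := by
  have h : ∀ z : Fin n → Vtx m q, (x = z ∘ ⇑σ⁻¹) = (x ∘ σ = z) := fun z => by
    rw [eq_iff_iff]
    constructor
    · rintro rfl; ext i; simp
    · rintro rfl; ext i; simp
  simp only [permMat, Matrix.mul_apply, Matrix.of_apply, h, inv_inv, ite_mul, one_mul, zero_mul,
    mul_ite, mul_one, mul_zero, Finset.sum_ite_eq, Finset.sum_ite_eq', Finset.mem_univ, if_true]

theorem permMat_conj_iff [∀ i, NeZero (q i)]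
    (M : Matrix (Fin n → Vtx m q) (Fin n → Vtx m q) ℂ) :
    (∀ σ : Equiv.Perm (Fin n), permMat m q n σ * M * permMat m q n σ⁻¹ = M) ↔
      ∀ (σ : Equiv.Perm (Fin n)) x y, M (x ∘ σ) (y ∘ σ) = M x y := by
  refine forall_congr' fun σ => ?_
  rw [← Matrix.ext_iff]
  simp only [permMat_conj_apply]

/-- The symmetrization of a Kronecker product. -/
def symKron (Ms : Fin n → Matrix (Vtx m q) (Vtx m q) ℂ) :
    Matrix (Fin n → Vtx m q) (Fin n → Vtx m q) ℂ :=
  ∑ σ : Equiv.Perm (Fin n), kron m q n (Ms ∘ σ)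

theorem symKron_comp (Ms : Fin n → Matrix (Vtx m q) (Vtx m q) ℂ) (τ : Equiv.Perm (Fin n)) :
    symKron (Ms ∘ τ) = symKron Ms := by
  unfold symKron
  exact Fintype.sum_equiv (Equiv.mulLeft τ) _ _ fun σ => rfl

variable [∀ i, NeZero (q i)]

theorem kron_mul (A B : Fin n → Matrix (Vtx m q) (Vtx m q) ℂ) :
    kron m q n A * kron m q n B = kron m q n (fun i => A i * B i) := by
  ext x y
  simp only [kron_apply, Matrix.mul_apply, Finset.prod_univ_sum, Fintype.piFinset_univ,
    Finset.prod_mul_distrib]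

/-- The matrix `1 ⊗ ⋯ ⊗ a ⊗ ⋯ ⊗ 1` with `a` in position `i`, as an algebra homomorphism in `a`. -/
def posHom (i : Fin n) : Matrix (Vtx m q) (Vtx m q) ℂ →ₐ[ℂ]
    Matrix (Fin n → Vtx m q) (Fin n → Vtx m q) ℂ :=
  AlgHom.ofLinearMap
    { toFun := fun a => kron m q n (Function.update (fun _ => 1) i a)
      map_add' := fun a b => by
        ext x y
        simp only [Matrix.add_apply, kron_update_apply, add_mul]
      map_smul' := fun c a => by
        ext x y
        simp only [Matrix.smul_apply, kron_update_apply, RingHom.id_apply, smul_eq_mul, mul_assoc] }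
    (by
      change kron m q n (Function.update (fun _ => 1) i 1) = 1
      rw [← kron_one]
      congr 1
      exact Function.update_eq_self i (fun _ => 1))
    (fun a b => by
      change kron m q n (Function.update _ i _) =
        kron m q n (Function.update _ i _) * kron m q n (Function.update _ i _)
      rw [kron_mul]
      congr 1
      ext1 k
      by_cases hk : k = i
      · subst hk; simp
      · simp [hk])

theorem posHom_apply (i : Fin n) (a : Matrix (Vtx m q) (Vtx m q) ℂ) :
    posHom i a = kron m q n (Function.update (fun _ => 1) i a) := rfl

theorem posHom_commute {i j : Fin n} (h : i ≠ j) (a b : Matrix (Vtx m q) (Vtx m q) ℂ) :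
    posHom i a * posHom j b = posHom j b * posHom i a := by
  rw [posHom_apply, posHom_apply, kron_mul, kron_mul]
  congr 1
  ext1 k
  by_cases hi : k = i
  · subst hi; simp [h]
  · by_cases hj : k = j
    · subst hj; simp [hi]
    · simp [hi, hj]

/-- The derivation-like map `a ↦ ∑ᵢ 1 ⊗ ⋯ ⊗ a ⊗ ⋯ ⊗ 1`. -/
def Dmap (m n : ℕ) (q : ℕ → ℕ) [∀ i, NeZero (q i)] : Matrix (Vtx m q) (Vtx m q) ℂ →ₗ[ℂ]
    Matrix (Fin n → Vtx m q) (Fin n → Vtx m q) ℂ :=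
  ∑ i : Fin n, (posHom i).toLinearMap

theorem Dmap_apply (a : Matrix (Vtx m q) (Vtx m q) ℂ) :
    Dmap m n q a = ∑ i : Fin n, posHom i a := by
  simp [Dmap]

/-- `Dmap` is a homomorphism of Lie algebras. -/
theorem Dmap_bracket (a b : Matrix (Vtx m q) (Vtx m q) ℂ) :
    Dmap m n q (a * b - b * a) = Dmap m n q a * Dmap m n q b - Dmap m n q b * Dmap m n q a := by
  simp only [Dmap_apply, Finset.sum_mul_sum]
  rw [Finset.sum_comm (f := fun i j => posHom i b * posHom j a), ← Finset.sum_sub_distrib]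
  refine Finset.sum_congr rfl fun i _ => ?_
  rw [← Finset.sum_sub_distrib, Finset.sum_eq_single i]
  · simp
  · intro j _ hj
    rw [posHom_commute hj.symm, sub_self]
  · simp

/-- For `n = 1`, `Dmap` is multiplicative. -/
theorem Dmap_mul_of_eq_one (h : n = 1) (a b : Matrix (Vtx m q) (Vtx m q) ℂ) :
    Dmap m n q (a * b) = Dmap m n q a * Dmap m n q b := by
  subst h
  simp [Dmap_apply]

/-- Multiplying by `Dmap a` acts on the factors of a symmetrized product by the Leibniz rule. -/
theorem Dmap_mul_symKron (a : Matrix (Vtx m q) (Vtx m q) ℂ)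
    (Ms : Fin n → Matrix (Vtx m q) (Vtx m q) ℂ) :
    Dmap m n q a * symKron Ms = ∑ j, symKron (Function.update Ms j (a * Ms j)) := by
  unfold symKron
  rw [Dmap_apply, Finset.sum_mul_sum, Finset.sum_comm, Finset.sum_comm (γ := Fin n)]
  refine Finset.sum_congr rfl fun σ _ => ?_
  refine Fintype.sum_equiv σ _ _ fun i => ?_
  rw [posHom_apply, kron_mul]
  congr 1
  ext1 k
  by_cases hk : k = i
  · subst hk; simp
  · simp [hk]

/-- A subalgebra containing `Dmap a` for all `a ∈ T` contains all symmetrized Kronecker products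
with factors in `T`; the induction is on the number of factors different from `1`. -/
theorem symKron_mem (B : Subalgebra ℂ (Matrix (Fin n → Vtx m q) (Fin n → Vtx m q) ℂ))
    (T : Subalgebra ℂ (Matrix (Vtx m q) (Vtx m q) ℂ)) (hD : ∀ a ∈ T, Dmap m n q a ∈ B) (k : ℕ) :
    ∀ Ms : Fin n → Matrix (Vtx m q) (Vtx m q) ℂ, (∀ i, Ms i ∈ T) →
      (Finset.univ.filter fun i => Ms i ≠ 1).card ≤ k → symKron Ms ∈ B := by
  classical
  induction k with
  | zero =>
    intro Ms _ hcard
    have h1 : Ms = fun _ => 1 := by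
      ext1 i
      by_contra hi
      have : i ∈ Finset.univ.filter fun i => Ms i ≠ 1 := by simpa using hi
      rw [Finset.card_eq_zero.1 (Nat.le_zero.1 hcard)] at this
      simp at this
    unfold symKron
    refine sum_mem fun σ _ => ?_
    rw [h1]
    have : kron m q n ((fun _ => 1) ∘ ⇑σ) = 1 := kron_one
    rw [this]
    exact one_mem B
  | succ k ih =>
    intro Ms hT hcard
    by_cases hall : ∀ i, Ms i = 1
    · refine ih Ms hT ?_
      simp [hall]
    push Not at hall
    obtain ⟨i₀, hi₀⟩ := hall
    set Ms' := Function.update Ms i₀ 1 with hMs'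
    have hT' : ∀ i, Ms' i ∈ T := fun i => by
      by_cases h : i = i₀
      · subst h; simp [hMs']
      · simp [hMs', h, hT]
    have hsub : (Finset.univ.filter fun i => Ms' i ≠ 1) =
        (Finset.univ.filter fun i => Ms i ≠ 1).erase i₀ := by
      ext i
      by_cases h : i = i₀
      · subst h; simp [hMs']
      · simp [hMs', h]
    have hcard' : (Finset.univ.filter fun i => Ms' i ≠ 1).card ≤ k := by
      rw [hsub, Finset.card_erase_of_mem (by simpa using hi₀)]
      omega
    have hstep := mul_mem (hD _ (hT i₀)) (ih Ms' hT' hcard')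
    rw [Dmap_mul_symKron,
      ← Finset.sum_filter_add_sum_filter_not Finset.univ (fun j => Ms' j = 1)] at hstep
    -- Positions already occupied: the number of nontrivial factors does not grow.
    have hocc : ∑ j ∈ Finset.univ.filter (fun j => ¬ Ms' j = 1),
        symKron (Function.update Ms' j (Ms i₀ * Ms' j)) ∈ B := by
      refine sum_mem fun j hj => ih _ (fun i => ?_) (le_trans (Finset.card_le_card ?_) hcard')
      · by_cases h : i = j
        · subst h; simpa using mul_mem (hT i₀) (hT' i)
        · simpa [h] using hT' i
      · intro i hi
        by_cases h : i = j
        · subst h; simpa using hj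
        · simpa [h] using hi
    -- Free positions: each contributes a permutation of `Ms`.
    have hfree : ∀ j ∈ Finset.univ.filter (fun j => Ms' j = 1),
        symKron (Function.update Ms' j (Ms i₀ * Ms' j)) = symKron Ms := by
      intro j hj
      have hj1 : Ms' j = 1 := by simpa using hj
      rw [← symKron_comp Ms (Equiv.swap i₀ j)]
      congr 1
      ext1 i
      rw [hj1, mul_one]
      by_cases h : i = j
      · subst h; simp
      · rw [Function.update_of_ne h]
        by_cases h' : i = i₀
        · subst h'
          have hjj : Ms' j = Ms j := by simp [hMs', Ne.symm h]
          rw [Function.comp_apply, Equiv.swap_apply_left, ← hjj, hj1]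
          simp [hMs']
        · simp [hMs', h', Equiv.swap_apply_of_ne_of_ne h' h]
    rw [Finset.sum_congr rfl hfree, Finset.sum_const] at hstep
    have h2 := sub_mem hstep hocc
    rw [add_sub_cancel_right, ← Nat.cast_smul_eq_nsmul ℂ] at h2
    have hne : ((Finset.univ.filter (fun j => Ms' j = 1)).card : ℂ) ≠ 0 := by
      rw [Nat.cast_ne_zero]
      refine (Finset.card_pos.2 ⟨i₀, ?_⟩).ne'
      simp [hMs']
    have h3 := B.smul_mem h2 (((Finset.univ.filter (fun j => Ms' j = 1)).card : ℂ)⁻¹)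
    rwa [smul_smul, inv_mul_cancel₀ hne, one_smul] at h3

/-- Averaging over the symmetric group: a symmetric tensor with factors in `T` lies in every
subalgebra containing `Dmap a` for all `a ∈ T`. -/
theorem symmetric_mem (B : Subalgebra ℂ (Matrix (Fin n → Vtx m q) (Fin n → Vtx m q) ℂ))
    (T : Subalgebra ℂ (Matrix (Vtx m q) (Vtx m q) ℂ)) (hD : ∀ a ∈ T, Dmap m n q a ∈ B)
    {M : Matrix (Fin n → Vtx m q) (Fin n → Vtx m q) ℂ}
    (hM : M ∈ Submodule.span ℂ
            {N | ∃ Ms : Fin n → Matrix (Vtx m q) (Vtx m q) ℂ,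
              (∀ i, Ms i ∈ T) ∧ N = kron m q n Ms})
    (hsym : ∀ σ : Equiv.Perm (Fin n), permMat m q n σ * M * permMat m q n σ⁻¹ = M) :
    M ∈ B := by
  have key : ∑ σ : Equiv.Perm (Fin n), permMat m q n σ * M * permMat m q n σ⁻¹ ∈ B := by
    clear hsym
    induction hM using Submodule.span_induction with
    | mem x hx =>
      obtain ⟨Ms, hMs, rfl⟩ := hx
      convert symKron_mem B T hD n Ms hMs ((Finset.card_le_univ _).trans (by simp)) using 1
      unfold symKron
      refine Fintype.sum_equiv (Equiv.inv _) _ _ fun σ => ?_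
      ext x y
      rw [permMat_conj_apply, kron_apply, kron_apply]
      refine Fintype.prod_equiv σ _ _ fun i => ?_
      simp
    | zero => simp
    | add x y _ _ hx hy =>
      simp only [mul_add, add_mul, Finset.sum_add_distrib]
      exact add_mem hx hy
    | smul a x _ hx =>
      simp only [Matrix.mul_smul, Matrix.smul_mul, ← Finset.smul_sum]
      exact B.smul_mem hx a
  rw [Finset.sum_congr rfl (fun σ _ => hsym σ), Finset.sum_const,
    ← Nat.cast_smul_eq_nsmul ℂ] at key
  have hne : ((Finset.univ : Finset (Equiv.Perm (Fin n))).card : ℂ) ≠ 0 := by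
    rw [Nat.cast_ne_zero]
    exact Finset.card_ne_zero_of_mem (Finset.mem_univ 1)
  have h3 := B.smul_mem key (((Finset.univ : Finset (Equiv.Perm (Fin n))).card : ℂ)⁻¹)
  rwa [smul_smul, inv_mul_cancel₀ hne, one_smul] at h3

end Tensor

/-! ### The generators of `𝐓(m,n)` -/

section Generators

variable {m n : ℕ} {q : ℕ → ℕ}

/-- The level, as an element of `Fin (m + 1)`. -/
def lev (v : Vtx m q) : Fin (m + 1) := ⟨level m q v, Nat.lt_succ_of_le (level_le_m v)⟩

/-- The shape of a tuple of levels: the sizes of the fibres. -/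
def fib (g : Fin n → Fin (m + 1)) (j : Fin (m + 1)) : ℕ :=
  (Finset.univ.filter fun i => g i = j).card

theorem hasShape_iff (x : Fin n → Vtx m q) (lam : Fin (m + 1) → ℕ) :
    hasShape m q n x lam ↔ fib (fun i => lev (x i)) = lam := by
  simp only [hasShape, funext_iff, fib, lev, Fin.ext_iff]

theorem fib_mem_ShapeSet (g : Fin n → Fin (m + 1)) : fib g ∈ ShapeSet m n := by
  simp only [ShapeSet, Finset.mem_filter, Fintype.mem_piFinset, Finset.mem_range]
  constructor
  · intro j
    exact Nat.lt_succ_of_le ((Finset.card_le_univ _).trans (by simp))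
  · have := Finset.card_eq_sum_card_fiberwise (f := g) (s := Finset.univ) (t := Finset.univ)
      (by simp)
    simpa [fib] using this.symm

theorem adjOne_fin_apply (j : Fin (m + 1)) (x y : Vtx m q) :
    AdjOne m q j x y = if lev (x - y) = j then 1 else 0 := by
  rw [adjOne_apply (Nat.le_of_lt_succ j.2)]
  simp only [lev, Fin.ext_iff]

theorem adjOne_zero_eq_one : AdjOne m q 0 = 1 := by
  rw [adjOne_zero, Cm_zero]

/-- At an entry `(x, y)`, only the tuple `g` of levels of the `x_i - y_i` contributes. -/
theorem AdjN_eq (lam : Fin (m + 1) → ℕ) :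
    AdjN m q n lam = ∑ g ∈ Finset.univ.filter (fun g : Fin n → Fin (m + 1) => fib g = lam),
      kron m q n (fun i => AdjOne m q (g i)) := by
  ext x y
  simp only [Matrix.sum_apply, kron_apply, adjOne_fin_apply, AdjN, Matrix.of_apply, hasShape_iff,
    Fintype.prod_ite_zero, Finset.prod_const_one, ← funext_iff,
    Finset.sum_filter]
  rw [Finset.sum_eq_single (fun i => lev (x i - y i))]
  · simp
  · intro g _ hg
    simp [hg.symm]
  · simp

theorem DualIdemN_eq (lam : Fin (m + 1) → ℕ) :
    DualIdemN m q n lam = ∑ g ∈ Finset.univ.filter (fun g : Fin n → Fin (m + 1) => fib g = lam),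
      kron m q n (fun i => DualIdemOne m q (g i)) := by
  ext x y
  have hE : ∀ (j : Fin (m + 1)) (u v : Vtx m q),
      DualIdemOne m q j u v = if u = v ∧ lev u = j then 1 else 0 := fun j u v => by
    rw [dualIdemOne_eq (Nat.le_of_lt_succ j.2), Matrix.diagonal_apply, ite_and]
    simp only [lev, Fin.ext_iff]
  simp only [Matrix.sum_apply, kron_apply, hE, DualIdemN, Matrix.diagonal_apply, hasShape_iff,
    Fintype.prod_ite_zero, Finset.prod_const_one, forall_and,
    ← funext_iff, Finset.sum_filter]
  by_cases hxy : x = y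
  · rw [Finset.sum_eq_single (fun i => lev (x i))]
    · simp [hxy]
    · intro g _ hg
      simp [hg.symm]
    · simp
  · simp [hxy]

theorem hasShape_comp (x : Fin n → Vtx m q) (lam : Fin (m + 1) → ℕ) (σ : Equiv.Perm (Fin n)) :
    hasShape m q n (x ∘ σ) lam ↔ hasShape m q n x lam := by
  unfold hasShape
  refine forall_congr' fun j => ?_
  rw [← Finset.card_map σ.toEmbedding]
  congr! 2
  ext i
  simp only [Finset.mem_map_equiv, Finset.mem_filter, Finset.mem_univ, true_and,
    Function.comp_apply, Equiv.apply_symm_apply]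

variable [∀ i, NeZero (q i)]

/-- The easy inclusion: `𝐓(m,n)` consists of symmetric tensors. -/
theorem TerN_le {M : Matrix (Fin n → Vtx m q) (Fin n → Vtx m q) ℂ} (hM : M ∈ TerN m q n) :
    M ∈ Submodule.span ℂ {N | ∃ Ms : Fin n → Matrix (Vtx m q) (Vtx m q) ℂ,
      (∀ i, Ms i ∈ Ter1 m q) ∧ N = kron m q n Ms} ∧
    ∀ (σ : Equiv.Perm (Fin n)) x y, M (x ∘ σ) (y ∘ σ) = M x y := by
  unfold TerN at hM
  induction hM using Algebra.adjoin_induction with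
  | mem N hN =>
    rcases hN with ⟨lam, -, rfl⟩ | ⟨lam, -, rfl⟩
    · refine ⟨?_, fun σ x y => ?_⟩
      · rw [AdjN_eq]
        refine sum_mem fun g _ => Submodule.subset_span ⟨_, fun i => ?_, rfl⟩
        exact Algebra.subset_adjoin (Or.inl ⟨g i, Nat.le_of_lt_succ (g i).2, rfl⟩)
      · have := hasShape_comp (fun i => x i - y i) lam σ
        simp only [AdjN, Matrix.of_apply, ← this]
        rfl
    · refine ⟨?_, fun σ x y => ?_⟩
      · rw [DualIdemN_eq]
        refine sum_mem fun g _ => Submodule.subset_span ⟨_, fun i => ?_, rfl⟩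
        exact Algebra.subset_adjoin (Or.inr ⟨g i, Nat.le_of_lt_succ (g i).2, rfl⟩)
      · have hinj : x ∘ σ = y ∘ σ ↔ x = y := σ.surjective.injective_comp_right.eq_iff
        simp only [DualIdemN, Matrix.diagonal_apply, hasShape_comp, hinj]
  | algebraMap r =>
    refine ⟨?_, fun σ x y => ?_⟩
    · rw [Algebra.algebraMap_eq_smul_one, ← kron_one]
      exact Submodule.smul_mem _ _ (Submodule.subset_span ⟨_, fun i => one_mem _, rfl⟩)
    · have hinj : x ∘ σ = y ∘ σ ↔ x = y := σ.surjective.injective_comp_right.eq_iff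
      simp only [Algebra.algebraMap_eq_smul_one, Matrix.smul_apply, Matrix.one_apply, hinj]
  | add A B _ _ hA hB =>
    refine ⟨add_mem hA.1 hB.1, fun σ x y => ?_⟩
    rw [Matrix.add_apply, Matrix.add_apply, hA.2, hB.2]
  | mul A B _ _ hA hB =>
    refine ⟨?_, fun σ x y => ?_⟩
    · have h := Submodule.mul_mem_mul hA.1 hB.1
      rw [Submodule.span_mul_span] at h
      refine Submodule.span_mono ?_ h
      rintro _ ⟨_, ⟨Ms, hMs, rfl⟩, _, ⟨Ns, hNs, rfl⟩, rfl⟩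
      exact ⟨_, fun i => mul_mem (hMs i) (hNs i), kron_mul Ms Ns⟩
    · rw [Matrix.mul_apply, Matrix.mul_apply]
      refine (Fintype.sum_equiv (Equiv.arrowCongr σ.symm (Equiv.refl _)) _ _ fun z => ?_).symm
      have hz : (Equiv.arrowCongr σ.symm (Equiv.refl (Vtx m q))) z = z ∘ σ := by
        ext1 i; simp [Equiv.arrowCongr]
      rw [hz, hA.2, hB.2]

/-- A tuple of levels whose shape is that of `(j, 0, …, 0)` is a permutation of it. -/
theorem fib_eq_iff (g : Fin n → Fin (m + 1)) (i₀ : Fin n) {j : Fin (m + 1)} (hj : j ≠ 0) :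
    fib g = fib (Function.update (fun _ => 0) i₀ j) ↔
      ∃ i, g = Function.update (fun _ => 0) i j := by
  have hone : ∀ i : Fin n, (Finset.univ.filter fun k =>
      Function.update (fun _ => (0 : Fin (m + 1))) i j k = j) = {i} := by
    intro i
    ext k
    by_cases hk : k = i
    · simp [hk]
    · simp [hk, hj.symm]
  constructor
  · intro h
    have h1 := congrFun h j
    unfold fib at h1
    rw [hone, Finset.card_singleton, Finset.card_eq_one] at h1
    obtain ⟨i, hi⟩ := h1
    refine ⟨i, funext fun k => ?_⟩
    have hmem : ∀ k, g k = j ↔ k = i := fun k => by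
      have := Finset.ext_iff.1 hi k
      simpa using this
    by_cases hk : k = i
    · rw [hk, Function.update_self]; exact (hmem i).2 rfl
    · rw [Function.update_of_ne hk]
      by_contra h0
      have h2 := congrFun h (g k)
      have h3 : fib (Function.update (fun _ => 0) i₀ j) (g k) = 0 := by
        unfold fib
        rw [Finset.card_eq_zero, Finset.filter_eq_empty_iff]
        intro l _ hl
        by_cases hli : l = i₀
        · subst hli
          rw [Function.update_self] at hl
          exact hk ((hmem k).1 hl.symm)
        · rw [Function.update_of_ne hli] at hl
          exact h0 hl.symm
      rw [h3] at h2
      unfold fib at h2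
      rw [Finset.card_eq_zero, Finset.filter_eq_empty_iff] at h2
      exact h2 (Finset.mem_univ k) rfl
  · rintro ⟨i, rfl⟩
    funext l
    unfold fib
    rw [← Finset.card_map (Equiv.swap i i₀).toEmbedding]
    congr 1
    ext k
    simp only [Finset.mem_map_equiv, Finset.mem_filter, Finset.mem_univ, true_and,
      Equiv.symm_swap]
    by_cases hk : k = i₀
    · subst hk; simp
    · have : Equiv.swap i i₀ k ≠ i := by
        rwa [ne_eq, Equiv.swap_apply_eq_iff, Equiv.swap_apply_left]
      rw [Function.update_of_ne this, Function.update_of_ne hk]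

theorem Dmap_adjOne_mem (hn : 1 ≤ n) {j : ℕ} (hj : j ≤ m) :
    Dmap m n q (AdjOne m q j) ∈ TerN m q n := by
  rcases Nat.eq_zero_or_pos j with rfl | hpos
  · rw [adjOne_zero_eq_one, Dmap_apply]
    exact sum_mem fun i _ => by rw [map_one]; exact one_mem _
  -- `Dmap (A_j)` is the adjacency matrix of the shape with one coordinate of level `j`
  -- and all others of level `0`.
  let j' : Fin (m + 1) := ⟨j, Nat.lt_succ_of_le hj⟩
  have hj' : j' ≠ 0 := by
    intro h
    have := congrArg Fin.val h
    simp [j'] at this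
    omega
  let i₀ : Fin n := ⟨0, hn⟩
  have hD : Dmap m n q (AdjOne m q j) =
      AdjN m q n (fib (Function.update (fun _ => 0) i₀ j')) := by
    rw [AdjN_eq, Dmap_apply]
    have himg : (Finset.univ.filter fun g : Fin n → Fin (m + 1) =>
        fib g = fib (Function.update (fun _ => 0) i₀ j')) =
        Finset.univ.image fun i => Function.update (fun _ => 0) i j' := by
      ext g
      simp only [Finset.mem_filter, Finset.mem_univ, true_and, Finset.mem_image,
        fib_eq_iff g i₀ hj', eq_comm]
    rw [himg, Finset.sum_image]
    · refine Finset.sum_congr rfl fun i _ => ?_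
      rw [posHom_apply]
      congr 1
      ext1 k
      by_cases hk : k = i
      · subst hk; simp [j']
      · simp [hk, adjOne_zero_eq_one]
    · intro i _ k _ hik
      by_contra hne
      have := congrFun hik i
      simp [hne, hj'] at this
  rw [hD]
  exact Algebra.subset_adjoin (Or.inl ⟨_, fib_mem_ShapeSet _, rfl⟩)

theorem Dmap_dualIdemOne_mem {j : ℕ} (hj : j ≤ m) :
    Dmap m n q (DualIdemOne m q j) ∈ TerN m q n := by
  let j' : Fin (m + 1) := ⟨j, Nat.lt_succ_of_le hj⟩
  -- The diagonal entry of `Dmap (E*_j)` at `y` is the number of coordinates of level `j`.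
  have hD : Dmap m n q (DualIdemOne m q j) =
      ∑ lam ∈ ShapeSet m n, (lam j' : ℂ) • DualIdemN m q n lam := by
    ext x y
    simp only [Dmap_apply, Matrix.sum_apply, posHom_apply, kron_update_apply, Matrix.smul_apply,
      DualIdemN, dualIdemOne_eq hj, Matrix.diagonal_apply, Matrix.one_apply, hasShape_iff]
    by_cases hxy : x = y
    · subst hxy
      simp only [if_true, Finset.prod_const_one, mul_one, smul_eq_mul, mul_ite, mul_zero,
        Finset.sum_ite_eq, fib_mem_ShapeSet, Finset.sum_boole]
      simp only [fib, lev, Fin.ext_iff, j']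
    · rw [Finset.sum_eq_zero, Finset.sum_eq_zero]
      · simp [hxy]
      · intro i _
        obtain ⟨k, hk⟩ := Function.ne_iff.1 hxy
        by_cases hki : k = i
        · subst hki; simp [hk]
        · rw [Finset.prod_eq_zero (i := k) (by simp [hki]) (by simp [hk]), mul_zero]
  rw [hD]
  refine sum_mem fun lam hlam => Subalgebra.smul_mem _ ?_ _
  exact Algebra.subset_adjoin (Or.inr ⟨lam, hlam, rfl⟩)

/-- All `Dmap a` with `a ∈ T` lie in `𝐓(m,n)`: the set of `a` for which this holds is a Lie algebra
containing the generators of `T`, and an associative algebra if `n = 1`. -/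
theorem Dmap_mem_TerN (hn : 1 ≤ n)
    (hcase : m = 1 ∨ m = 2 ∨ (m = 3 ∧ q 2 = 2) ∨ n = 1)
    {a : Matrix (Vtx m q) (Vtx m q) ℂ} (ha : a ∈ Ter1 m q) : Dmap m n q a ∈ TerN m q n := by
  let S : Submodule ℂ (Matrix (Vtx m q) (Vtx m q) ℂ) :=
    (Subalgebra.toSubmodule (TerN m q n)).comap (Dmap m n q)
  have hC : ∀ j, Cm m q j ∈ S := Cm_mem S fun j hj => Dmap_adjOne_mem hn hj
  have hf : ∀ j, fm m q j ∈ S := fm_mem S fun j hj => Dmap_dualIdemOne_mem hj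
  have hbr : ∀ a ∈ S, ∀ b ∈ S, a * b - b * a ∈ S := fun a ha b hb => by
    change Dmap m n q (a * b - b * a) ∈ TerN m q n
    rw [Dmap_bracket]
    exact sub_mem (mul_mem ha hb) (mul_mem hb ha)
  have hfC : ∀ i j, fm m q i * Cm m q j ∈ S := fun i j => by
    by_cases h : n = 1
    · change Dmap m n q (fm m q i * Cm m q j) ∈ TerN m q n
      rw [Dmap_mul_of_eq_one h]
      exact mul_mem (hf i) (hC j)
    · exact fm_mul_Cm_mem S hbr hC hf (by tauto) i j
  exact Wspan_le S (Rm_mem S hbr hC hf) hfC (Ter1_le_Wspan ha)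

end Generators

/-- If `m = 1`, `m = 2`, (`m = 3` and `q_2 = 2`), or `n = 1`, then the
Terwilliger algebra `𝐓(m,n)` of the ordered Hamming scheme equals the `n`-fold
symmetric tensor algebra of the Terwilliger algebra `T` of `𝔛(m,1)`: it consists
exactly of those matrices that lie in the span of the Kronecker products
`M_1⊗⋯⊗M_n` with all `M_i ∈ T` and are invariant under conjugation by all
coordinate-permutation matrices `P_σ`. -/
theorem stmt18 (m n : ℕ) (hm : 1 ≤ m) (hn : 1 ≤ n) (q : ℕ → ℕ)
    [∀ i, NeZero (q i)] (hq : ∀ i, 2 ≤ q i)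
    (hcase : m = 1 ∨ m = 2 ∨ (m = 3 ∧ q 2 = 2) ∨ n = 1) :
    ∀ M : Matrix (Fin n → Vtx m q) (Fin n → Vtx m q) ℂ,
      M ∈ TerN m q n ↔
        (M ∈ Submodule.span ℂ
            {N | ∃ Ms : Fin n → Matrix (Vtx m q) (Vtx m q) ℂ,
              (∀ i, Ms i ∈ Ter1 m q) ∧ N = kron m q n Ms} ∧
          ∀ σ : Equiv.Perm (Fin n),
            permMat m q n σ * M * permMat m q n σ⁻¹ = M) := by
  intro M
  constructor
  · intro hM
    exact ⟨(TerN_le hM).1, (permMat_conj_iff M).2 (TerN_le hM).2⟩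
  · rintro ⟨hM, hsym⟩
    exact symmetric_mem (TerN m q n) (Ter1 m q) (fun a ha => Dmap_mem_TerN hn hcase ha) hM hsym

end OHS

end
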